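/- Let X be a Polish metric space and {P_n} Borel probability measures on X. Suppose that for every δ > 0 there exist sets K_n ⊂ X with P_n(K_n) ≥ 1 − δ for every n, such that every sequence {x_n} with x_n ∈ K_n for all n has a convergent subsequence (along any subsequence of indices). Then {P_n} admits a subsequence converging weakly to a Borel probability measure P on X. -/

import Mathlib

open MeasureTheory Filter Topology

/-! Each `P n` is carried up to `δ` by a compact set `C n`, and `⋃ n, K n ∩ C n` is relatively
compact: a sequence in it either visits one fixed `C N` infinitely often, or has a subsequence whose
indices `n` increase strictly, which extends to a selection of `K`. The closure of this union
carries every `P n` up to `2δ`, so `P` is tight and Prokhorov's theorem applies. -/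

open Set TopologicalSpace
open scoped ENNReal NNReal

/-- Sequential compactness of a sequence of sets: every selection `x n ∈ K n` is sequentially
relatively compact, with limits allowed outside the sets. Replacing finitely many nonempty `K n` by
other nonempty sets does not affect it, and it is void as soon as one `K n` is empty. -/
def IsAsymptoticallySeqCompact {X : Type*} [TopologicalSpace X] (K : ℕ → Set X) : Prop :=
  ∀ x : ℕ → X, (∀ n, x n ∈ K n) → ∀ φ : ℕ → ℕ, StrictMono φ →
    ∃ ψ : ℕ → ℕ, StrictMono ψ ∧ ∃ l : X, Tendsto (x ∘ φ ∘ ψ) atTop (𝓝 l)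

namespace IsAsymptoticallySeqCompact

variable {X : Type*} [TopologicalSpace X] {K : ℕ → Set X}

theorem exists_subseq_tendsto_of_strictMono (hK : IsAsymptoticallySeqCompact K)
    (hne : ∀ n, (K n).Nonempty) {m : ℕ → ℕ} (hm : StrictMono m) {y : ℕ → X}
    (hy : ∀ k, y k ∈ K (m k)) :
    ∃ φ : ℕ → ℕ, StrictMono φ ∧ ∃ l, Tendsto (y ∘ φ) atTop (𝓝 l) := by
  choose d hd using hne
  let x : ℕ → X := Function.extend m y d
  have x_comp (k : ℕ) : x (m k) = y k := hm.injective.extend_apply y d k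
  have x_mem (n : ℕ) : x n ∈ K n := by
    by_cases hn : ∃ k, m k = n
    · obtain ⟨k, rfl⟩ := hn
      exact x_comp k ▸ hy k
    · have x_eq : x n = d n := Function.extend_apply' y d n hn
      exact x_eq ▸ hd n
  obtain ⟨ψ, hψ, l, hl⟩ := hK x x_mem m hm
  exact ⟨ψ, hψ, l, hl.congr fun k ↦ x_comp (ψ k)⟩

theorem exists_subseq_tendsto_of_mem_iUnion_inter (hK : IsAsymptoticallySeqCompact K)
    (hne : ∀ n, (K n).Nonempty) {C : ℕ → Set X} (hC : ∀ n, IsSeqCompact (C n)) {y : ℕ → X}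
    (hy : ∀ k, y k ∈ ⋃ n, K n ∩ C n) :
    ∃ φ : ℕ → ℕ, StrictMono φ ∧ ∃ l, Tendsto (y ∘ φ) atTop (𝓝 l) := by
  choose m hyK hyC using fun k ↦ mem_iUnion.1 (hy k)
  by_cases hm : ∃ N, ∃ᶠ k in atTop, m k = N
  · obtain ⟨N, hN⟩ := hm
    obtain ⟨l, -, φ, hφ, hl⟩ := (hC N).subseq_of_frequently_in (hN.mono fun k hk ↦ hk ▸ hyC k)
    exact ⟨φ, hφ, l, hl⟩
  · have m_tendsto : Tendsto m atTop atTop := by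
      rw [← Nat.cofinite_eq_atTop, Tendsto, le_cofinite_iff_eventually_ne, Nat.cofinite_eq_atTop]
      exact fun N ↦ not_frequently.1 (not_exists.1 hm N)
    obtain ⟨φ, hφ, hmφ⟩ := strictMono_subseq_of_tendsto_atTop m_tendsto
    obtain ⟨ψ, hψ, l, hl⟩ :=
      hK.exists_subseq_tendsto_of_strictMono hne hmφ fun k ↦ hyK (φ k)
    exact ⟨φ ∘ ψ, hφ.comp hψ, l, hl⟩

end IsAsymptoticallySeqCompact

theorem isCompact_closure_of_forall_exists_subseq_tendsto {X : Type*} [TopologicalSpace X]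
    [PseudoMetrizableSpace X] {s : Set X}
    (hs : ∀ y : ℕ → X, (∀ n, y n ∈ s) →
      ∃ φ : ℕ → ℕ, StrictMono φ ∧ ∃ l, Tendsto (y ∘ φ) atTop (𝓝 l)) :
    IsCompact (closure s) := by
  let := pseudoMetrizableSpacePseudoMetric X
  refine IsSeqCompact.isCompact fun u hu ↦ ?_
  choose v v_mem dist_lt using fun n : ℕ ↦
    Metric.mem_closure_iff.1 (hu n) (1 / ((n : ℝ) + 1)) Nat.one_div_pos_of_nat
  obtain ⟨φ, hφ, l, hl⟩ := hs v v_mem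
  have dist_tendsto : Tendsto (fun n ↦ dist (v n) (u n)) atTop (𝓝 0) :=
    squeeze_zero (fun _ ↦ dist_nonneg) (fun n ↦ dist_comm (u n) (v n) ▸ (dist_lt n).le)
      tendsto_one_div_add_atTop_nhds_zero_nat
  exact ⟨l, mem_closure_of_tendsto hl (Eventually.of_forall fun n ↦ v_mem (φ n)), φ, hφ,
    (tendsto_iff_of_dist (dist_tendsto.comp hφ.tendsto_atTop)).1 hl⟩

theorem IsAsymptoticallySeqCompact.isCompact_closure_iUnion_inter {X : Type*} [TopologicalSpace X]
    [PseudoMetrizableSpace X] {K C : ℕ → Set X} (hK : IsAsymptoticallySeqCompact K)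
    (hne : ∀ n, (K n).Nonempty) (hC : ∀ n, IsCompact (C n)) :
    IsCompact (closure (⋃ n, K n ∩ C n)) :=
  isCompact_closure_of_forall_exists_subseq_tendsto fun _ hy ↦
    hK.exists_subseq_tendsto_of_mem_iUnion_inter hne (fun n ↦ (hC n).isSeqCompact) hy

theorem prob_compl_le_add_of_inter_subset {Ω : Type*} [MeasurableSpace Ω] {μ : Measure Ω}
    [IsProbabilityMeasure μ] {s t u : Set Ω} {a b : ℝ≥0∞} (hu : MeasurableSet u)
    (hstu : s ∩ t ⊆ u) (hs : 1 - a ≤ μ s) (ht : μ tᶜ ≤ b) : μ uᶜ ≤ a + b := by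
  have hs_sub : s ⊆ u ∪ tᶜ := by grind
  rw [prob_compl_eq_one_sub hu, tsub_le_iff_right]
  calc 1 ≤ a + μ s := tsub_le_iff_left.1 hs
    _ ≤ a + (μ u + μ tᶜ) := by grw [hs_sub, measure_union_le]
    _ ≤ a + (μ u + b) := by gcongr
    _ = a + b + μ u := by ring

section Tightness

variable {X : Type*} [TopologicalSpace X] [MetrizableSpace X] [MeasurableSpace X]

theorem isTightMeasureSet_range_of_isAsymptoticallySeqCompact [OpensMeasurableSpace X]
    {P : ℕ → Measure X} [∀ n, IsProbabilityMeasure (P n)]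
    (hP : ∀ n, IsTightMeasureSet {P n})
    (h : ∀ δ : ℝ, 0 < δ → ∃ K : ℕ → Set X,
      (∀ n, ENNReal.ofReal (1 - δ) ≤ P n (K n)) ∧ IsAsymptoticallySeqCompact K) :
    IsTightMeasureSet (range P) := by
  rw [isTightMeasureSet_iff_exists_isCompact_measure_compl_le]
  intro ε hε
  obtain ⟨δ, δ_pos, δ_lt⟩ : ∃ δ : ℝ≥0, (0 : ℝ≥0∞) < δ ∧ (δ : ℝ≥0∞) < min (ε / 2) 1 :=
    ENNReal.lt_iff_exists_nnreal_btwn.1 (lt_min (ENNReal.half_pos hε.ne') one_pos)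
  obtain ⟨δ_lt_half, δ_lt_one⟩ := lt_min_iff.1 δ_lt
  obtain ⟨K, K_measure, hK⟩ := h δ (mod_cast δ_pos)
  replace K_measure (n : ℕ) : 1 - (δ : ℝ≥0∞) ≤ P n (K n) := by
    simpa only [ENNReal.ofReal_sub 1 δ.coe_nonneg, ENNReal.ofReal_one, ENNReal.ofReal_coe_nnreal]
      using K_measure n
  have K_nonempty (n : ℕ) : (K n).Nonempty :=
    nonempty_of_measure_ne_zero ((tsub_pos_of_lt δ_lt_one).trans_le (K_measure n)).ne'
  choose C C_compact C_measure using fun n ↦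
    isTightMeasureSet_iff_exists_isCompact_measure_compl_le.1 (hP n) δ δ_pos
  refine ⟨_, hK.isCompact_closure_iUnion_inter K_nonempty C_compact, ?_⟩
  rintro _ ⟨n, rfl⟩
  have inter_subset : K n ∩ C n ⊆ closure (⋃ n, K n ∩ C n) :=
    (subset_iUnion (fun n ↦ K n ∩ C n) n).trans subset_closure
  calc P n (closure (⋃ n, K n ∩ C n))ᶜ
      ≤ δ + δ := prob_compl_le_add_of_inter_subset isClosed_closure.measurableSet inter_subset
        (K_measure n) (C_measure n (P n) rfl)
    _ ≤ ε / 2 + ε / 2 := add_le_add δ_lt_half.le δ_lt_half.le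
    _ = ε := ENNReal.add_halves ε

variable [SecondCountableTopology X] [BorelSpace X]

theorem exists_subseq_tendsto_of_isTightMeasureSet_range {p : ℕ → ProbabilityMeasure X}
    (hp : IsTightMeasureSet (range fun n ↦ (p n : Measure X))) :
    ∃ φ : ℕ → ℕ, StrictMono φ ∧ ∃ Q, Tendsto (p ∘ φ) atTop (𝓝 Q) := by
  let := metrizableSpaceMetric X
  have closure_compact : IsCompact (closure (range p)) :=
    isCompact_closure_of_isTightMeasureSet
      (hp.subset (range_comp ProbabilityMeasure.toMeasure p).ge)
  obtain ⟨Q, -, φ, hφ, hQ⟩ :=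
    closure_compact.tendsto_subseq fun n ↦ subset_closure (mem_range_self n)
  exact ⟨φ, hφ, Q, hQ⟩

theorem tightness_criterion_polish_general
    (P : ℕ → Measure X) [∀ n, IsProbabilityMeasure (P n)]
    (hP : ∀ n, IsTightMeasureSet {P n})
    (h : ∀ δ : ℝ, 0 < δ → ∃ K : ℕ → Set X,
      (∀ n, ENNReal.ofReal (1 - δ) ≤ P n (K n)) ∧ IsAsymptoticallySeqCompact K) :
    ∃ φ : ℕ → ℕ, StrictMono φ ∧ ∃ Q : Measure X, IsProbabilityMeasure Q ∧
      ∀ f : BoundedContinuousFunction X ℝ,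
        Tendsto (fun n ↦ ∫ x, f x ∂(P (φ n))) atTop (𝓝 (∫ x, f x ∂Q)) := by
  have P_tight := isTightMeasureSet_range_of_isAsymptoticallySeqCompact hP h
  obtain ⟨φ, hφ, Q, hQ⟩ := exists_subseq_tendsto_of_isTightMeasureSet_range
    (p := fun n ↦ ⟨P n, inferInstance⟩) P_tight
  exact ⟨φ, hφ, Q, inferInstance, ProbabilityMeasure.tendsto_iff_forall_integral_tendsto.1 hQ⟩

end Tightness

/-- A tightness-type criterion on a Polish space: if for every `δ > 0` there are
sets `K_n` with `P_n(K_n) ≥ 1 − δ` such that every sequence of points `x_n ∈ K_n`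
has a convergent subsequence (along any subsequence of indices), then `{P_n}`
admits a weakly convergent subsequence. -/
theorem tightness_criterion_polish
    (X : Type*) [MetricSpace X] [TopologicalSpace.SeparableSpace X] [CompleteSpace X]
    [MeasurableSpace X] [BorelSpace X]
    (P : ℕ → Measure X) [∀ n, IsProbabilityMeasure (P n)]
    (h : ∀ δ : ℝ, 0 < δ → ∃ K : ℕ → Set X,
      (∀ n, ENNReal.ofReal (1 - δ) ≤ P n (K n)) ∧
      (∀ x : ℕ → X, (∀ n, x n ∈ K n) →
        ∀ φ : ℕ → ℕ, StrictMono φ →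
          ∃ ψ : ℕ → ℕ, StrictMono ψ ∧ ∃ l : X,
            Tendsto (x ∘ φ ∘ ψ) atTop (nhds l))) :
    ∃ φ : ℕ → ℕ, StrictMono φ ∧ ∃ Q : Measure X, IsProbabilityMeasure Q ∧
      ∀ f : BoundedContinuousFunction X ℝ,
        Tendsto (fun n => ∫ x, f x ∂(P (φ n))) atTop
          (nhds (∫ x, f x ∂Q)) := by
  have := UniformSpace.secondCountable_of_separable X
  exact tightness_criterion_polish_general P (fun _ ↦ isTightMeasureSet_singleton) h
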